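/- arXiv:1607.07562 — 2 statements merged into one kernel-verified Lean document; each statement's English description precedes it below -/
import Mathlib

section
/- Let Φ : ℂ × ℂ → ℂ be a holomorphic (jointly complex-analytic) function of two complex variables that satisfies the complexified Born–Infeld equation (1 + Φ_x²)·Φ_yy − 2·Φ_x·Φ_y·Φ_xy − (1 − Φ_y²)·Φ_xx = 0 at every point, where subscripts denote complex partial derivatives in the first and second variable. Then the function Ψ defined by Ψ(x,y) := Φ(i·x, y) satisfies the complexified maximal surface equation (1 − Ψ_x²)·Ψ_yy + 2·Ψ_x·Ψ_y·Ψ_xy + (1 − Ψ_y²)·Ψ_xx = 0 at every point. -/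
open Complex

/-- Complex partial derivative in the first variable of a function `ℂ × ℂ → ℂ`. -/
noncomputable def cpd1 (f : ℂ × ℂ → ℂ) : ℂ × ℂ → ℂ :=
  fun p => deriv (fun x => f (x, p.2)) p.1

/-- Complex partial derivative in the second variable of a function `ℂ × ℂ → ℂ`. -/
noncomputable def cpd2 (f : ℂ × ℂ → ℂ) : ℂ × ℂ → ℂ :=
  fun p => deriv (fun y => f (p.1, y)) p.2

/-!
If `Ψ (x, y) = Φ (c * x, y)`, every derivative of `Ψ` in `x` produces a factor `c`. Each monomial of
the two equations carries either no or exactly two derivatives in `x`. The equations differ exactly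
in the sign of those with two, and a rescaling with `c ^ 2 = -1` changes precisely these signs.
-/

/-- The left-hand side of the complexified Born–Infeld equation for `f`. -/
noncomputable def bornInfeldExpr (f : ℂ × ℂ → ℂ) (p : ℂ × ℂ) : ℂ :=
  (1 + (cpd1 f p) ^ 2) * cpd2 (cpd2 f) p
    - 2 * cpd1 f p * cpd2 f p * cpd2 (cpd1 f) p
    - (1 - (cpd2 f p) ^ 2) * cpd1 (cpd1 f) p

/-- The left-hand side of the complexified maximal surface equation for `f`. -/
noncomputable def maximalSurfaceExpr (f : ℂ × ℂ → ℂ) (p : ℂ × ℂ) : ℂ :=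
  (1 - (cpd1 f p) ^ 2) * cpd2 (cpd2 f) p
    + 2 * cpd1 f p * cpd2 f p * cpd2 (cpd1 f) p
    + (1 - (cpd2 f p) ^ 2) * cpd1 (cpd1 f) p

/-- The function `(x, y) ↦ f (c * x, y)`; for `c = I` it is the Wick rotation of `f` in the first
variable. -/
def rescaleFst (c : ℂ) (f : ℂ × ℂ → ℂ) : ℂ × ℂ → ℂ :=
  fun p => f (c * p.1, p.2)

section PartialDerivatives

variable (c : ℂ) (f : ℂ × ℂ → ℂ)

theorem cpd1_const_smul : cpd1 (c • f) = c • cpd1 f :=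
  funext fun _ => deriv_const_mul_field c

theorem cpd2_const_smul : cpd2 (c • f) = c • cpd2 f :=
  funext fun _ => deriv_const_mul_field c

/-- Where `f` is not differentiable in `x`, both sides are the junk value `0`. -/
theorem cpd1_rescaleFst : cpd1 (rescaleFst c f) = c • rescaleFst c (cpd1 f) :=
  funext fun p => deriv_comp_mul_left c (fun x => f (x, p.2)) p.1

theorem cpd2_rescaleFst : cpd2 (rescaleFst c f) = rescaleFst c (cpd2 f) :=
  rfl

theorem cpd1_cpd1_rescaleFst :
    cpd1 (cpd1 (rescaleFst c f)) = c ^ 2 • rescaleFst c (cpd1 (cpd1 f)) := by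
  rw [cpd1_rescaleFst, cpd1_const_smul, cpd1_rescaleFst, smul_smul, sq]

theorem cpd2_cpd1_rescaleFst :
    cpd2 (cpd1 (rescaleFst c f)) = c • rescaleFst c (cpd2 (cpd1 f)) := by
  rw [cpd1_rescaleFst, cpd2_const_smul, cpd2_rescaleFst]

theorem cpd2_cpd2_rescaleFst :
    cpd2 (cpd2 (rescaleFst c f)) = rescaleFst c (cpd2 (cpd2 f)) := by
  rw [cpd2_rescaleFst, cpd2_rescaleFst]

end PartialDerivatives

theorem maximalSurfaceExpr_rescaleFst {c : ℂ} (hc : c ^ 2 = -1) (f : ℂ × ℂ → ℂ) :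
    maximalSurfaceExpr (rescaleFst c f) = rescaleFst c (bornInfeldExpr f) := by
  funext p
  rw [maximalSurfaceExpr, cpd1_cpd1_rescaleFst, cpd2_cpd1_rescaleFst, cpd2_cpd2_rescaleFst,
    cpd1_rescaleFst, cpd2_rescaleFst]
  simp only [Pi.smul_apply, smul_eq_mul, rescaleFst, bornInfeldExpr]
  set q : ℂ × ℂ := (c * p.1, p.2)
  linear_combination (-(cpd1 f q) ^ 2 * cpd2 (cpd2 f) q
    + 2 * cpd1 f q * cpd2 f q * cpd2 (cpd1 f) q
    + (1 - (cpd2 f q) ^ 2) * cpd1 (cpd1 f) q) * hc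

/-- Wick rotation in the first variable turns a holomorphic solution of the
complexified Born–Infeld equation into a solution of the complexified maximal
surface equation. -/
theorem wick_rotation_BornInfeld_to_maximal
    (Φ : ℂ × ℂ → ℂ) (hΦ : Differentiable ℂ Φ)
    (hBI : ∀ p : ℂ × ℂ,
      (1 + (cpd1 Φ p) ^ 2) * cpd2 (cpd2 Φ) p
        - 2 * cpd1 Φ p * cpd2 Φ p * cpd2 (cpd1 Φ) p
        - (1 - (cpd2 Φ p) ^ 2) * cpd1 (cpd1 Φ) p = 0)
    (Ψ : ℂ × ℂ → ℂ) (hΨ : ∀ x y : ℂ, Ψ (x, y) = Φ (I * x, y)) :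
    ∀ p : ℂ × ℂ,
      (1 - (cpd1 Ψ p) ^ 2) * cpd2 (cpd2 Ψ) p
        + 2 * cpd1 Ψ p * cpd2 Ψ p * cpd2 (cpd1 Ψ) p
        + (1 - (cpd2 Ψ p) ^ 2) * cpd1 (cpd1 Ψ) p = 0 := by
  intro p
  obtain rfl : Ψ = rescaleFst I Φ := funext fun p => hΨ p.1 p.2
  calc
    maximalSurfaceExpr (rescaleFst I Φ) p = bornInfeldExpr Φ (I * p.1, p.2) :=
      congrFun (maximalSurfaceExpr_rescaleFst I_sq Φ) p
    _ = 0 := hBI (I * p.1, p.2)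
end

section
/- Let ζ be a complex number with Im(ζ) > 0, and define x := (1/2)·Im(ζ − 1/ζ) and y := −(1/2)·Re(ζ + 1/ζ). Then x > 0 and arg(ζ) = π/2 + arctan(y/x), where arg denotes the principal argument. -/
/-!
Since `1 / ζ = conj ζ / |ζ|²`, the point `(x, y)` is a positive multiple of `(Im ζ, -Re ζ)`, so
`x > 0` and `y / x = -(Re ζ / Im ζ) = -cot (arg ζ) = tan (arg ζ - π / 2)`. In the upper half-plane
`0 < arg ζ < π`, which puts `arg ζ - π / 2` in the interval where `arctan` inverts `tan`.
-/

open Complex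

theorem im_sub_one_div (z : ℂ) : (z - 1 / z).im = (1 + (normSq z)⁻¹) * z.im := by
  rw [one_div, sub_im, inv_im]
  ring

theorem re_add_one_div (z : ℂ) : (z + 1 / z).re = (1 + (normSq z)⁻¹) * z.re := by
  rw [one_div, add_re, inv_re]
  ring

theorem arg_mem_Ioo_of_im_pos {z : ℂ} (hz : 0 < z.im) : arg z ∈ Set.Ioo 0 Real.pi :=
  ⟨(arg_nonneg_iff.mpr hz.le).lt_of_ne' fun h => hz.ne' (arg_eq_zero_iff.mp h).2,
    arg_lt_pi_iff.mpr (Or.inr hz.ne')⟩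

theorem arg_eq_pi_div_two_sub_arctan_of_im_pos {z : ℂ} (hz : 0 < z.im) :
    arg z = Real.pi / 2 - Real.arctan (z.re / z.im) := by
  obtain ⟨hpos, hlt⟩ := arg_mem_Ioo_of_im_pos hz
  have htan : Real.tan (Real.pi / 2 - arg z) = z.re / z.im := by
    rw [Real.tan_pi_div_two_sub, tan_arg, inv_div]
  rw [← htan, Real.arctan_tan (by linarith) (by linarith), sub_sub_cancel]

/-- The Weierstrass–Enneper parametrization of the Lorentzian helicoid with data
`M(ζ) = −i/(2ζ²)` lies on the graph `φ = π/2 + arctan(y/x)`: for `Im ζ > 0` the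
parametrized point has `x > 0` and `arg ζ = π/2 + arctan(y/x)`. -/
theorem helicoid_parametrization_on_graph
    (ζ : ℂ) (hζ : 0 < ζ.im)
    (x y : ℝ)
    (hx : x = (1 / 2) * (ζ - 1 / ζ).im)
    (hy : y = -(1 / 2) * (ζ + 1 / ζ).re) :
    0 < x ∧ Complex.arg ζ = Real.pi / 2 + Real.arctan (y / x) := by
  have hc : 0 < 1 + (normSq ζ)⁻¹ :=
    add_pos_of_pos_of_nonneg one_pos (inv_nonneg.mpr (normSq_nonneg ζ))
  rw [im_sub_one_div] at hx
  rw [re_add_one_div] at hy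
  have hslope : y / x = -(ζ.re / ζ.im) := by
    rw [hx, hy, neg_mul, neg_div, mul_div_mul_left _ _ one_half_pos.ne',
      mul_div_mul_left _ _ hc.ne']
  refine ⟨hx ▸ mul_pos one_half_pos (mul_pos hc hζ), ?_⟩
  rw [hslope, Real.arctan_neg, ← sub_eq_add_neg]
  exact arg_eq_pi_div_two_sub_arctan_of_im_pos hζ
end
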